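/- Assume the Diophantine setting of the context and set τ₁ := 2·(15/2 + 3/(2 ln 2))·(2+q). Then for all finitely supported α, β : ℤ → ℕ with equal total mass |α| = |β| ≥ 1, α ≠ β, zero momentum ∑_{i∈ℤ} i·(α_i − β_i) = 0, and every j ∈ ℤ with α_j + β_j ≥ 1, one has γ · ⌈j⌉^{2τ₁} ≤ 6^{τ₁} · (4⁶ e^{27})^{2+q} · |∑_{i∈ℤ} ω_i (α_i − β_i)| · ∏_{i∈ℤ} ⌈i⌉^{τ₁(α_i+β_i)}. -/

import Mathlib

open scoped BigOperators

/-- `⟨j⟩ := max(|j|,1)` as a real number. -/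
noncomputable def jap (j : ℤ) : ℝ := max (|(j : ℝ)|) 1

/-- `⌈j⌉ := max(|j|,2)` as a real number. -/
noncomputable def jml (j : ℤ) : ℝ := max (|(j : ℝ)|) 2


lemma two_le_jml (j : ℤ) : 2 ≤ jml j := le_max_right _ _
lemma abs_le_jml (j : ℤ) : |(j : ℝ)| ≤ jml j := le_max_left _ _
lemma jap_le_jml (j : ℤ) : jap j ≤ jml j := max_le_max le_rfl (by norm_num)
lemma one_le_jap (j : ℤ) : 1 ≤ jap j := le_max_right _ _

lemma sum_le_prod_two {ι : Type*} (R : Finset ι) (hR : R.Nonempty) (f : ι → ℝ)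
    (hf : ∀ a, 2 ≤ f a) : 2 ≤ ∏ a ∈ R, f a ∧ ∑ a ∈ R, f a ≤ ∏ a ∈ R, f a := by
  classical
  induction hR using Finset.Nonempty.cons_induction with
  | singleton a => simpa using hf a
  | cons a s ha hs ih =>
    rw [Finset.sum_cons, Finset.prod_cons]
    obtain ⟨h1, h2⟩ := ih
    have := hf a
    constructor <;> nlinarith [mul_nonneg (sub_nonneg.2 this) (sub_nonneg.2 h1)]

lemma succ_sq_le (k : ℕ) : ((k : ℝ) + 1) ^ 2 ≤ 36 * 2 ^ k := by
  have h : ∀ k : ℕ, 2 * (k : ℝ) + 3 ≤ 4 * 2 ^ k ∧ ((k : ℝ) + 1) ^ 2 ≤ 36 * 2 ^ k := by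
    intro k
    induction k with
    | zero => norm_num
    | succ n ih =>
      obtain ⟨h1, h2⟩ := ih
      have h3 : (1 : ℝ) ≤ 2 ^ n := one_le_pow₀ (by norm_num)
      rw [pow_succ (2 : ℝ)]; push_cast
      refine ⟨by linarith, ?_⟩
      have h4 : (n : ℝ) ^ 2 + 2 * n + 1 ≤ 36 * 2 ^ n := by linarith
      nlinarith
  exact (h k).2

lemma one_add_sq_le (k : ℕ) : 1 + (k : ℝ) ^ 2 ≤ 4 ^ k := by
  induction k with
  | zero => norm_num
  | succ n ih =>
    rw [pow_succ (4 : ℝ)]; push_cast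
    nlinarith [sq_nonneg ((n : ℝ) - 1)]

lemma factor_le (W : ℝ) (hW : 2 ≤ W) (n l : ℤ) (hl : l ≠ 0) :
    1 + (l : ℝ) ^ 2 * jap n ^ W ≤ (4 * jml n ^ W) ^ l.natAbs := by
  have h1 : (l : ℝ) ^ 2 = (l.natAbs : ℝ) ^ 2 := by
    rw [Nat.cast_natAbs]; push_cast; rw [sq_abs]
  have hk : l.natAbs ≠ 0 := by simpa using hl
  rw [h1]
  generalize l.natAbs = k at hk
  have hM := two_le_jml n
  have hx : jap n ^ W ≤ jml n ^ W :=
    Real.rpow_le_rpow (by linarith [one_le_jap n]) (jap_le_jml n) (by linarith)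
  have hy : 1 ≤ jml n ^ W := Real.one_le_rpow (by linarith) (by linarith)
  have hz : jml n ^ W ≤ (jml n ^ W) ^ k := le_self_pow₀ hy hk
  rw [mul_pow]
  calc 1 + (k : ℝ) ^ 2 * jap n ^ W ≤ (1 + (k : ℝ) ^ 2) * jml n ^ W := by
        nlinarith [sq_nonneg (k : ℝ)]
    _ ≤ 4 ^ k * (jml n ^ W) ^ k := by
        gcongr
        exact one_add_sq_le k

lemma erase_nonempty {ι : Type*} [DecidableEq ι] (T : Finset ι) (s : ι → ℤ)
    (hs : ∀ a ∈ T, s a = 1 ∨ s a = -1) (h0 : ∑ a ∈ T, s a = 0) (a : ι) (ha : a ∈ T) :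
    (T.erase a).Nonempty := by
  by_contra h
  rw [Finset.not_nonempty_iff_eq_empty] at h
  have := Finset.add_sum_erase T s ha
  rw [h, h0] at this
  rcases hs a ha with h | h <;> simp [h] at this

/-- momentum bound: one element is at most the product of the others. -/
lemma jml_le_prod {ι : Type*} [DecidableEq ι] (T : Finset ι) (x s : ι → ℤ)
    (hs : ∀ a ∈ T, s a = 1 ∨ s a = -1) (h0 : ∑ a ∈ T, s a = 0)
    (h1 : ∑ a ∈ T, (s a : ℝ) * x a = 0) (a : ι) (ha : a ∈ T) :
    jml (x a) ≤ ∏ b ∈ T.erase a, jml (x b) := by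
  have hne := erase_nonempty T s hs h0 a ha
  obtain ⟨h2, h3⟩ := sum_le_prod_two (T.erase a) hne (fun b => jml (x b)) (fun b => two_le_jml _)
  refine max_le ?_ h2
  refine le_trans ?_ h3
  have habs : ∀ b ∈ T, |(s b : ℝ) * x b| = |(x b : ℝ)| := by
    intro b hb
    rcases hs b hb with h | h <;> simp [h]
  rw [← Finset.add_sum_erase T _ ha] at h1
  rw [← habs a ha, eq_neg_of_add_eq_zero_left h1, abs_neg]
  refine (Finset.abs_sum_le_sum_abs _ _).trans (Finset.sum_le_sum fun b hb => ?_)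
  rw [habs b (Finset.mem_of_mem_erase hb)]
  exact abs_le_jml _

/-- The combinatorial part of the resonant case. -/
lemma core_bounds {ι : Type*} [DecidableEq ι] (T : Finset ι) (x s : ι → ℤ) (e : ι → ℝ)
    (hs : ∀ a ∈ T, s a = 1 ∨ s a = -1) (hxs : ∀ a ∈ T, ∀ b ∈ T, x a = x b → s a = s b)
    (h0 : ∑ a ∈ T, s a = 0) (h1 : ∑ a ∈ T, (s a : ℝ) * x a = 0)
    (he : ∀ a ∈ T, |e a| ≤ 1 / 2)
    (h2 : |∑ a ∈ T, (s a : ℝ) * ((x a : ℝ) ^ 2 + e a)| < 1) (hT : T.Nonempty) :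
    ∃ M₁ M₂ P : ℝ, ∃ K : ℕ, (∀ a ∈ T, jml (x a) ≤ M₁) ∧ 2 ≤ M₂ ∧ M₂ ≤ M₁ ∧
      M₁ ≤ (K + 1) * M₂ ∧ 2 ^ K ≤ P ∧ M₁ ≤ 2 * P ^ 2 ∧ T.card = K + 2 ∧ 2 ≤ P ∧
      ∏ a ∈ T, jml (x a) = M₁ * M₂ * P := by
  obtain ⟨a, ha, hamax⟩ := Finset.exists_max_image T (fun a => jml (x a)) hT
  obtain ⟨b, hb, hbmax⟩ := Finset.exists_max_image (T.erase a) (fun a => jml (x a))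
    (erase_nonempty T s hs h0 a ha)
  have hbT := Finset.mem_of_mem_erase hb
  set R := (T.erase a).erase b with hRdef
  have hRT : ∀ c ∈ R, c ∈ T := fun c hc =>
    Finset.mem_of_mem_erase (Finset.mem_of_mem_erase hc)
  have hcard : T.card = R.card + 2 := by
    rw [hRdef, Finset.card_erase_of_mem hb, Finset.card_erase_of_mem ha]
    have := Finset.card_pos.2 hT
    have := Finset.card_pos.2 ⟨b, hb⟩
    rw [Finset.card_erase_of_mem ha] at this
    omega
  have split : ∀ f : ι → ℝ, ∑ c ∈ T, f c = f a + (f b + ∑ c ∈ R, f c) := by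
    intro f
    rw [hRdef, Finset.add_sum_erase _ _ hb, Finset.add_sum_erase _ _ ha]
  have splitZ : ∑ c ∈ T, s c = s a + (s b + ∑ c ∈ R, s c) := by
    rw [hRdef, Finset.add_sum_erase _ _ hb, Finset.add_sum_erase _ _ ha]
  have hprod : ∏ c ∈ T, jml (x c) = jml (x a) * jml (x b) * ∏ c ∈ R, jml (x c) := by
    rw [hRdef, mul_assoc, Finset.mul_prod_erase _ (fun c => jml (x c)) hb,
      Finset.mul_prod_erase _ (fun c => jml (x c)) ha]
  have habs : ∀ c ∈ T, ∀ y : ℝ, |(s c : ℝ) * y| = |y| := by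
    intro c hc y
    rcases hs c hc with h | h <;> simp [h]
  have hsne : ∀ c ∈ T, (s c : ℝ) = 1 ∨ (s c : ℝ) = -1 := by
    intro c hc
    rcases hs c hc with h | h <;> simp [h]
  have hRX : |∑ c ∈ R, (s c : ℝ) * x c| ≤ ∑ c ∈ R, |(x c : ℝ)| := by
    refine (Finset.abs_sum_le_sum_abs _ _).trans (Finset.sum_le_sum fun c hc => ?_)
    rw [habs c (hRT c hc)]
  -- R nonempty
  have hRne : R.Nonempty := by
    by_contra h
    rw [Finset.not_nonempty_iff_eq_empty] at h
    rw [splitZ, h] at h0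
    rw [split, h] at h1
    simp only [Finset.sum_empty, add_zero] at h0 h1
    have hsa : s a = - s b := by linarith
    have : (x a : ℝ) = x b := by
      rw [hsa] at h1
      push_cast at h1
      rcases hsne b hbT with h | h <;> rw [h] at h1 <;> linarith
    have := hxs a ha b hbT (by exact_mod_cast this)
    rcases hs b hbT with h | h <;> omega
  set Q := ∑ c ∈ R, jml (x c) ^ 2 with hQ
  set P := ∏ c ∈ R, jml (x c) with hP
  have hQP : Q ≤ P ^ 2 := by
    have := (sum_le_prod_two R hRne (fun c => jml (x c) ^ 2)
      (fun c => by nlinarith [two_le_jml (x c)])).2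
    rwa [Finset.prod_pow] at this
  have hP2 : 2 ≤ P := (sum_le_prod_two R hRne (fun c => jml (x c)) (fun c => two_le_jml _)).1
  have hPK : (2 : ℝ) ^ R.card ≤ P := by
    rw [← Finset.prod_const]
    exact Finset.prod_le_prod (fun _ _ => by norm_num) (fun c _ => two_le_jml _)
  have hQK : 4 * (R.card : ℝ) ≤ Q := by
    have : ∑ c ∈ R, (4 : ℝ) ≤ Q :=
      Finset.sum_le_sum fun c _ => by nlinarith [two_le_jml (x c)]
    rw [Finset.sum_const, nsmul_eq_mul] at this
    linarith
  have hK1 : (1 : ℝ) ≤ R.card := by exact_mod_cast Finset.card_pos.2 hRne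
  have hXQ : ∑ c ∈ R, |(x c : ℝ)| ≤ Q :=
    Finset.sum_le_sum fun c _ => by nlinarith [two_le_jml (x c), abs_le_jml (x c)]
  have hmom : |(s a : ℝ) * x a + s b * x b| ≤ ∑ c ∈ R, |(x c : ℝ)| := by
    rw [split] at h1
    have : (s a : ℝ) * x a + s b * x b = - ∑ c ∈ R, (s c : ℝ) * x c := by linarith
    rw [this, abs_neg]
    exact hRX
  have hen : |(s a : ℝ) * (x a : ℝ) ^ 2 + s b * (x b : ℝ) ^ 2| ≤ 2 * Q := by
    have hE : |∑ c ∈ T, (s c : ℝ) * e c| ≤ (R.card + 2) / 2 := by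
      calc |∑ c ∈ T, (s c : ℝ) * e c| ≤ ∑ c ∈ T, (1 / 2 : ℝ) := by
            refine (Finset.abs_sum_le_sum_abs _ _).trans (Finset.sum_le_sum fun c hc => ?_)
            rw [habs c hc]; exact he c hc
        _ = (R.card + 2) / 2 := by
            rw [Finset.sum_const, nsmul_eq_mul, hcard]; push_cast; ring
    have hX2 : |∑ c ∈ R, (s c : ℝ) * (x c : ℝ) ^ 2| ≤ Q := by
      refine (Finset.abs_sum_le_sum_abs _ _).trans (Finset.sum_le_sum fun c hc => ?_)
      rw [habs c (hRT c hc), abs_pow]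
      exact pow_le_pow_left₀ (abs_nonneg _) (abs_le_jml _) 2
    have h3 : ∑ c ∈ T, (s c : ℝ) * ((x c : ℝ) ^ 2 + e c) =
        ∑ c ∈ T, (s c : ℝ) * (x c : ℝ) ^ 2 + ∑ c ∈ T, (s c : ℝ) * e c := by
      rw [← Finset.sum_add_distrib]
      exact Finset.sum_congr rfl fun c _ => by ring
    rw [h3, split] at h2
    rw [abs_lt] at h2
    rw [abs_le] at hE hX2 ⊢
    constructor <;> linarith [h2.1, h2.2, hE.1, hE.2, hX2.1, hX2.2]
  have hxa : |(x a : ℝ)| ≤ 2 * Q := by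
    have hQ0 : 0 ≤ Q := by linarith
    have hmom' := hmom.trans hXQ
    by_cases hsab : s a = s b
    · have h5 : (x a : ℝ) ^ 2 + (x b : ℝ) ^ 2 ≤ 2 * Q := by
        rw [hsab, ← mul_add, habs b hbT] at hen
        exact (le_abs_self _).trans hen
      have h6 : |x a| ≤ (x a) ^ 2 := by
        rw [← sq_abs]
        rcases (abs_nonneg (x a)).eq_or_lt with h | h
        · rw [← h]; norm_num
        · exact le_self_pow₀ h (by norm_num)
      have h7 : |(x a : ℝ)| ≤ (x a : ℝ) ^ 2 := by exact_mod_cast h6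
      nlinarith [sq_nonneg (x b : ℝ)]
    · have hxne : x a ≠ x b := fun h => hsab (hxs a ha b hbT h)
      have hsa : s a = - s b := by
        rcases hs a ha with h | h <;> rcases hs b hbT with h' | h' <;> omega
      have hm : |(x a : ℝ) - x b| ≤ Q := by
        have : (s a : ℝ) * x a + s b * x b = s a * ((x a : ℝ) - x b) := by
          rw [hsa]; push_cast; ring
        rwa [this, habs a ha] at hmom'
      have hn : |(x a : ℝ) - x b| * |(x a : ℝ) + x b| ≤ 2 * Q := by
        have : (s a : ℝ) * (x a : ℝ) ^ 2 + s b * (x b : ℝ) ^ 2 =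
            s a * (((x a : ℝ) - x b) * (x a + x b)) := by
          rw [hsa]; push_cast; ring
        rwa [this, habs a ha, abs_mul] at hen
      have h8 : (1 : ℝ) ≤ |(x a : ℝ) - x b| := by
        have : 1 ≤ |x a - x b| := Int.one_le_abs (sub_ne_zero.2 hxne)
        exact_mod_cast this
      have h9 : |(x a : ℝ) + x b| ≤ 2 * Q := by nlinarith [abs_nonneg ((x a : ℝ) + x b)]
      rw [abs_le] at hm h9 ⊢
      constructor <;> linarith [hm.1, hm.2, h9.1, h9.2]
  refine ⟨jml (x a), jml (x b), P, R.card, hamax, two_le_jml _, hamax b hbT, ?_, hPK, ?_,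
    hcard, hP2, hprod⟩
  · have hb2 := two_le_jml (x b)
    refine max_le ?_ (by nlinarith)
    have h4 : |(x a : ℝ)| ≤ |(x b : ℝ)| + ∑ c ∈ R, |(x c : ℝ)| := by
      have h5 := habs a ha (x a)
      have h6 := habs b hbT (x b)
      have h7 : |(s a : ℝ) * x a| ≤ |(s a : ℝ) * x a + s b * x b| + |(s b : ℝ) * x b| := by
        have := abs_sub ((s a : ℝ) * x a + s b * x b) ((s b : ℝ) * x b)
        simpa using this
      rw [h5, h6] at h7
      linarith
    have h5 : ∑ c ∈ R, |(x c : ℝ)| ≤ R.card * jml (x b) := by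
      rw [← nsmul_eq_mul]
      exact Finset.sum_le_card_nsmul _ _ _ fun c hc =>
        (abs_le_jml _).trans (hbmax c (Finset.mem_of_mem_erase hc))
    linarith [abs_le_jml (x b)]
  · refine max_le (by linarith) (by nlinarith)

lemma core_final (W τ : ℝ) (hW : 2 ≤ W) (hτ : 15 * W ≤ τ) (M M₁ M₂ P : ℝ) (K : ℕ)
    (hM0 : 0 ≤ M) (hM : M ≤ M₁) (hM2 : 2 ≤ M₂) (hM21 : M₂ ≤ M₁) (hM1 : M₁ ≤ (K + 1) * M₂)
    (hPK : 2 ^ K ≤ P) (hMP : M₁ ≤ 2 * P ^ 2) (hP : 2 ≤ P) :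
    M ^ (2 * τ) * (4 ^ (K + 2) * (M₁ * M₂ * P) ^ W) ≤
      6 ^ τ * (16 : ℝ) ^ W * (M₁ * M₂ * P) ^ τ := by
  have hP0 : 0 < P := by linarith
  have hM20 : 0 < M₂ := by linarith
  have hM10 : 0 < M₁ := by linarith
  have hτ0 : 0 ≤ τ := by linarith
  have hW0 : 0 ≤ W := by linarith
  have hK : (K : ℝ) + 1 ≤ 6 * P ^ (1 / 2 : ℝ) := by
    rw [← Real.sqrt_eq_rpow]
    have h := succ_sq_le K
    have h3 : (6 * √P) ^ 2 = 36 * P := by rw [mul_pow, Real.sq_sqrt hP0.le]; norm_num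
    refine le_of_sq_le_sq ?_ (by positivity)
    rw [h3]; linarith
  have e1 : M₁ ^ τ ≤ 6 ^ τ * P ^ (τ / 2) * M₂ ^ τ := by
    calc M₁ ^ τ ≤ (6 * P ^ (1 / 2 : ℝ) * M₂) ^ τ := by
          apply Real.rpow_le_rpow hM10.le _ hτ0
          exact hM1.trans (by gcongr)
      _ = _ := by
          rw [Real.mul_rpow (by positivity) (by positivity),
            Real.mul_rpow (by positivity) (by positivity), ← Real.rpow_mul hP0.le]
          congr 3; ring
  have e2 : (4 : ℝ) ^ (K + 2) ≤ 4 ^ W * P ^ W := by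
    have h1 : (4 : ℝ) ^ (K + 2) = (2 ^ K) ^ 2 * 4 ^ 2 := by
      rw [pow_add, ← pow_mul, mul_comm K 2, pow_mul]; norm_num
    have h2 : (4 : ℝ) ^ 2 ≤ 4 ^ W := by
      rw [← Real.rpow_natCast]; exact Real.rpow_le_rpow_of_exponent_le (by norm_num) (by simpa)
    have h3 : P ^ 2 ≤ P ^ W := by
      rw [← Real.rpow_natCast]; exact Real.rpow_le_rpow_of_exponent_le (by linarith) (by simpa)
    have h4 : ((2 : ℝ) ^ K) ^ 2 ≤ P ^ 2 := by gcongr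
    rw [h1, mul_comm]
    exact mul_le_mul h2 (h4.trans h3) (by positivity) (by positivity)
  have e3 : (M₁ * M₂ * P) ^ W ≤ 4 ^ W * P ^ (5 * W) := by
    calc (M₁ * M₂ * P) ^ W ≤ (4 * P ^ (5 : ℝ)) ^ W := by
          apply Real.rpow_le_rpow (by positivity) _ hW0
          have : P ^ (5 : ℝ) = P ^ 2 * P ^ 2 * P := by
            rw [show (5 : ℝ) = ((5 : ℕ) : ℝ) by norm_num, Real.rpow_natCast]; ring
          rw [this]
          have : M₁ * M₂ ≤ (2 * P ^ 2) * (2 * P ^ 2) :=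
            mul_le_mul hMP (hM21.trans hMP) hM20.le (by positivity)
          nlinarith
      _ = _ := by
          rw [Real.mul_rpow (by positivity) (by positivity), ← Real.rpow_mul hP0.le]
  have e4 : P ^ W * P ^ (5 * W) ≤ P ^ (τ / 2) := by
    rw [← Real.rpow_add hP0]
    exact Real.rpow_le_rpow_of_exponent_le (by linarith) (by linarith)
  have e5 : M ^ (2 * τ) ≤ M₁ ^ τ * M₁ ^ τ := by
    rw [← Real.rpow_add hM10, ← two_mul]
    exact Real.rpow_le_rpow hM0 hM (by linarith)
  have e6 : (16 : ℝ) ^ W = 4 ^ W * 4 ^ W := by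
    rw [← Real.mul_rpow (by norm_num) (by norm_num)]; norm_num
  have e7 : P ^ τ = P ^ (τ / 2) * P ^ (τ / 2) := by
    rw [← Real.rpow_add hP0]; congr 1; ring
  have e8 : (M₁ * M₂ * P) ^ τ = M₁ ^ τ * M₂ ^ τ * (P ^ (τ / 2) * P ^ (τ / 2)) := by
    rw [Real.mul_rpow (by positivity) (by positivity),
      Real.mul_rpow (by positivity) (by positivity), e7]
  rw [e8, e6]
  calc M ^ (2 * τ) * (4 ^ (K + 2) * (M₁ * M₂ * P) ^ W)
      ≤ (M₁ ^ τ * (6 ^ τ * P ^ (τ / 2) * M₂ ^ τ)) *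
        ((4 ^ W * P ^ W) * (4 ^ W * P ^ (5 * W))) := by
        apply mul_le_mul (e5.trans (mul_le_mul_of_nonneg_left e1 (by positivity)))
          (mul_le_mul e2 e3 (by positivity) (by positivity)) (by positivity) (by positivity)
    _ = (M₁ ^ τ * (6 ^ τ * P ^ (τ / 2) * M₂ ^ τ) * (4 ^ W * 4 ^ W)) *
        (P ^ W * P ^ (5 * W)) := by ring
    _ ≤ (M₁ ^ τ * (6 ^ τ * P ^ (τ / 2) * M₂ ^ τ) * (4 ^ W * 4 ^ W)) * P ^ (τ / 2) :=
        mul_le_mul_of_nonneg_left e4 (by positivity)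
    _ = _ := by ring

/-- Abstract version, with `Π` the product over the expanded list. -/
lemma abstract_bound {ι : Type*} [DecidableEq ι] (T : Finset ι) (x s : ι → ℤ) (e : ι → ℝ)
    (hs : ∀ a ∈ T, s a = 1 ∨ s a = -1) (hxs : ∀ a ∈ T, ∀ b ∈ T, x a = x b → s a = s b)
    (h0 : ∑ a ∈ T, s a = 0) (h1 : ∑ a ∈ T, (s a : ℝ) * x a = 0)
    (he : ∀ a ∈ T, |e a| ≤ 1 / 2) (W τ γ : ℝ) (hW : 2 ≤ W) (hτ : 15 * W ≤ τ)
    (hγ0 : 0 < γ) (hγ1 : γ ≤ 1) (D : ℝ)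
    (hD : D = |∑ a ∈ T, (s a : ℝ) * ((x a : ℝ) ^ 2 + e a)|)
    (hdio : γ ≤ D * ∏ a ∈ T, (4 * jml (x a) ^ W)) (a : ι) (ha : a ∈ T) :
    γ * jml (x a) ^ (2 * τ) ≤ 6 ^ τ * (16 : ℝ) ^ W * D * (∏ a ∈ T, jml (x a)) ^ τ := by
  have hD0 : 0 ≤ D := hD ▸ abs_nonneg _
  have hMa := two_le_jml (x a)
  have hpos : ∀ b, 0 ≤ jml (x b) := fun b => by linarith [two_le_jml (x b)]
  have hτ0 : 0 ≤ τ := by linarith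
  by_cases hD1 : D < 1
  · obtain ⟨M₁, M₂, P, K, b1, b2, b3, b4, b5, b6, b7, b8, b9⟩ :=
      core_bounds T x s e hs hxs h0 h1 he (hD ▸ hD1) ⟨a, ha⟩
    have key := core_final W τ hW hτ (jml (x a)) M₁ M₂ P K (hpos a) (b1 a ha) b2 b3 b4 b5 b6 b8
    have hp : ∏ a ∈ T, (4 * jml (x a) ^ W) = 4 ^ (K + 2) * (M₁ * M₂ * P) ^ W := by
      rw [Finset.prod_mul_distrib, Finset.prod_const, b7, ← b9,
        Real.finsetProd_rpow _ _ (fun b _ => hpos b)]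
    rw [hp] at hdio
    rw [b9]
    have : 0 ≤ jml (x a) ^ (2 * τ) := Real.rpow_nonneg (hpos a) _
    calc γ * jml (x a) ^ (2 * τ)
        ≤ D * (4 ^ (K + 2) * (M₁ * M₂ * P) ^ W) * jml (x a) ^ (2 * τ) := by gcongr
      _ = D * (jml (x a) ^ (2 * τ) * (4 ^ (K + 2) * (M₁ * M₂ * P) ^ W)) := by ring
      _ ≤ D * (6 ^ τ * (16 : ℝ) ^ W * (M₁ * M₂ * P) ^ τ) := by gcongr
      _ = _ := by ring
  · push Not at hD1
    have h := jml_le_prod T x s hs h0 h1 a ha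
    have h3 : jml (x a) ^ 2 ≤ ∏ a ∈ T, jml (x a) := by
      rw [← Finset.mul_prod_erase T _ ha, sq]
      exact mul_le_mul_of_nonneg_left h (hpos a)
    have h4 : jml (x a) ^ (2 * τ) ≤ (∏ a ∈ T, jml (x a)) ^ τ := by
      rw [Real.rpow_mul (hpos a)]
      apply Real.rpow_le_rpow (Real.rpow_nonneg (hpos a) _) _ hτ0
      simpa using h3
    have h5 : (1 : ℝ) ≤ 6 ^ τ := Real.one_le_rpow (by norm_num) hτ0
    have h6 : (1 : ℝ) ≤ 16 ^ W := Real.one_le_rpow (by norm_num) (by linarith)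
    have h7 : 0 ≤ (∏ a ∈ T, jml (x a)) ^ τ :=
      Real.rpow_nonneg (Finset.prod_nonneg fun b _ => hpos b) _
    have h8 : (1 : ℝ) ≤ 6 ^ τ * 16 ^ W * D :=
      one_le_mul_of_one_le_of_one_le (one_le_mul_of_one_le_of_one_le h5 h6) hD1
    calc γ * jml (x a) ^ (2 * τ) ≤ 1 * jml (x a) ^ (2 * τ) := by gcongr
      _ ≤ 1 * (∏ a ∈ T, jml (x a)) ^ τ := by gcongr
      _ ≤ _ := by gcongr

/-- (Homological-equation small-divisor estimate, modified Sobolev,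
momentum-preserving case.) Under the Diophantine conditions on `ω`, with
`τ₁ := 2(15/2 + 3/(2 ln 2))(2+q)`, for all finitely supported `α ≠ β : ℤ → ℕ` with equal
total mass `≥ 1` and zero momentum, and every `j` with `α_j + β_j ≥ 1`,
`γ⌈j⌉^{2τ₁} ≤ 6^{τ₁}(4⁶e^{27})^{2+q}|∑ ω_i(α_i−β_i)|∏_i ⌈i⌉^{τ₁(α_i+β_i)}`. -/
theorem modified_sobolev_small_divisor_estimate
    (q γ : ℝ) (hq : 0 ≤ q) (hγ0 : 0 < γ) (hγ1 : γ ≤ 1)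
    (ω : ℤ → ℝ)
    (hω : ∀ j : ℤ, |ω j - (j : ℝ) ^ 2| * jap j ^ q ≤ 1 / 2)
    (hdio : ∀ ℓ : ℤ →₀ ℤ, ℓ ≠ 0 →
      γ * ∏ n ∈ ℓ.support, (1 + (ℓ n : ℝ) ^ 2 * jap n ^ (2 + q))⁻¹ <
        |∑ n ∈ ℓ.support, ω n * (ℓ n : ℝ)|)
    (α β : ℤ →₀ ℕ) (hne : α ≠ β)
    (hmass : (α.sum fun _ n => n) = β.sum fun _ n => n)
    (hmass1 : 1 ≤ α.sum fun _ n => n)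
    (hmom : ∑ i ∈ α.support ∪ β.support, (i : ℝ) * ((α i : ℝ) - (β i : ℝ)) = 0)
    (j : ℤ) (hj : 1 ≤ α j + β j) :
    γ * jml j ^ (2 * (2 * (15 / 2 + 3 / (2 * Real.log 2)) * (2 + q))) ≤
      (6 : ℝ) ^ (2 * (15 / 2 + 3 / (2 * Real.log 2)) * (2 + q)) *
        ((4 : ℝ) ^ (6 : ℕ) * Real.exp 27) ^ (2 + q) *
        |∑ i ∈ α.support ∪ β.support, ω i * ((α i : ℝ) - (β i : ℝ))| *
        ∏ i ∈ α.support ∪ β.support,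
          jml i ^ ((2 * (15 / 2 + 3 / (2 * Real.log 2)) * (2 + q)) *
            ((α i : ℝ) + (β i : ℝ))) := by
  classical
  set W : ℝ := 2 + q with hWdef
  set c : ℝ := 15 / 2 + 3 / (2 * Real.log 2) with hc
  have hW : 2 ≤ W := by linarith
  have hc1 : 15 / 2 ≤ c := by
    have : 0 ≤ 3 / (2 * Real.log 2) := by
      have := Real.log_pos (by norm_num : (1 : ℝ) < 2)
      positivity
    linarith
  have hτ : 15 * W ≤ 2 * c * W := by nlinarith
  generalize 2 * c * W = τ at hτ ⊢
  have hτ0 : 0 ≤ τ := by linarith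
  have hC : (16 : ℝ) ^ W ≤ ((4 : ℝ) ^ (6 : ℕ) * Real.exp 27) ^ W := by
    apply Real.rpow_le_rpow (by norm_num) _ (by linarith)
    have : (1 : ℝ) ≤ Real.exp 27 := Real.one_le_exp (by norm_num)
    linarith
  set U := α.support ∪ β.support with hU
  have hUα : ∀ i, i ∉ U → α i = 0 ∧ β i = 0 := by
    intro i hi
    simpa [hU] using hi
  obtain ⟨ℓ, hℓ⟩ : ∃ ℓ : ℤ →₀ ℤ, ∀ i, ℓ i = (α i : ℤ) - β i :=
    ⟨α.mapRange (fun n : ℕ => (n : ℤ)) rfl - β.mapRange (fun n : ℕ => (n : ℤ)) rfl, fun i => by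
      simp⟩
  have hℓ0 : ℓ ≠ 0 := by
    rintro rfl
    apply hne
    ext i
    have := hℓ i
    simp at this
    omega
  have hsub : ℓ.support ⊆ U := by
    intro i hi
    by_contra h
    have := hUα i h
    rw [Finsupp.mem_support_iff, hℓ, this.1, this.2] at hi
    simp at hi
  have hℓR : ∀ i, (ℓ i : ℝ) = (α i : ℝ) - β i := fun i => by rw [hℓ]; push_cast; rfl
  have hsumU : ∀ f : ℤ → ℝ, ∑ i ∈ U, f i * ((α i : ℝ) - β i) = ∑ i ∈ ℓ.support, f i * ℓ i := by
    intro f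
    simp_rw [← hℓR]
    symm
    apply Finset.sum_subset hsub
    intro i _ hi
    rw [Finsupp.notMem_support_iff.1 hi]; simp
  have hmass0 : ∑ i ∈ ℓ.support, (ℓ i : ℝ) = 0 := by
    have h := hsumU (fun _ => 1)
    simp only [one_mul] at h
    rw [← h, Finset.sum_sub_distrib]
    rw [Finsupp.sum_of_support_subset α Finset.subset_union_left _ (by simp),
      Finsupp.sum_of_support_subset β Finset.subset_union_right _ (by simp)] at hmass
    have : ∑ i ∈ U, (α i : ℝ) = ∑ i ∈ U, (β i : ℝ) := by exact_mod_cast hmass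
    linarith
  rw [hsumU] at hmom ⊢
  set D := |∑ i ∈ ℓ.support, ω i * (ℓ i : ℝ)| with hD
  have hD0 : 0 ≤ D := abs_nonneg _
  -- the expanded index set
  let T : Finset (Σ _ : ℤ, ℕ) := ℓ.support.sigma (fun i => Finset.range (ℓ i).natAbs)
  have hT : T = ℓ.support.sigma (fun i => Finset.range (ℓ i).natAbs) := rfl
  have hTsum : ∀ f : ℤ → ℝ, ∑ a ∈ T, ((ℓ a.1).sign : ℝ) * f a.1 = ∑ i ∈ ℓ.support, f i * ℓ i := by
    intro f
    rw [hT, Finset.sum_sigma]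
    apply Finset.sum_congr rfl
    intro i _
    simp only [Finset.sum_const, Finset.card_range, nsmul_eq_mul]
    have : ((ℓ i).sign : ℝ) * ((ℓ i).natAbs : ℝ) = ℓ i := by
      have := congrArg (fun z : ℤ => (z : ℝ)) (Int.sign_mul_natAbs (ℓ i))
      rw [Int.cast_mul, Int.cast_natCast] at this
      exact this
    rw [← this]; ring
  have hTprod : ∀ f : ℤ → ℝ, ∏ a ∈ T, f a.1 = ∏ i ∈ ℓ.support, f i ^ (ℓ i).natAbs := by
    intro f
    rw [hT, Finset.prod_sigma]
    apply Finset.prod_congr rfl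
    intro i _
    simp
  have hdio' : γ ≤ D * ∏ a ∈ T, (4 * jml a.1 ^ W) := by
    have h := (hdio ℓ hℓ0).le
    rw [hTprod (fun i => 4 * jml i ^ W)]
    rw [Finset.prod_inv_distrib] at h
    have hp : ∀ i, 0 < 1 + (ℓ i : ℝ) ^ 2 * jap i ^ W := fun i => by
      have : 0 ≤ jap i ^ W := Real.rpow_nonneg (by linarith [one_le_jap i]) _
      positivity
    have hp' : 0 < ∏ i ∈ ℓ.support, (1 + (ℓ i : ℝ) ^ 2 * jap i ^ W) :=
      Finset.prod_pos fun i _ => hp i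
    rw [← div_eq_mul_inv, div_le_iff₀ hp'] at h
    refine h.trans (mul_le_mul_of_nonneg_left ?_ hD0)
    exact Finset.prod_le_prod (fun i _ => (hp i).le) fun i hi =>
      factor_le W hW i (ℓ i) (Finsupp.mem_support_iff.1 hi)
  have hjpos : ∀ i, 0 < jml i := fun i => by linarith [two_le_jml i]
  have hPT : (∏ a ∈ T, jml a.1) ^ τ = ∏ i ∈ ℓ.support, jml i ^ (τ * ((ℓ i).natAbs : ℝ)) := by
    rw [hTprod, ← Real.finsetProd_rpow _ _ (fun i _ => pow_nonneg (hjpos i).le _)]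
    apply Finset.prod_congr rfl
    intro i _
    rw [← Real.rpow_natCast, ← Real.rpow_mul (hjpos i).le, mul_comm]
  have hnat : ∀ i, ((ℓ i).natAbs : ℝ) ≤ (α i : ℝ) + β i := by
    intro i
    have : (ℓ i).natAbs ≤ α i + β i := by have := hℓ i; omega
    exact_mod_cast this
  have hone : ∀ i, 1 ≤ jml i ^ (τ * ((α i : ℝ) + β i)) := fun i =>
    Real.one_le_rpow (by linarith [two_le_jml i]) (by positivity)
  have hmono : ∀ i, jml i ^ (τ * ((ℓ i).natAbs : ℝ)) ≤ jml i ^ (τ * ((α i : ℝ) + β i)) := fun i =>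
    Real.rpow_le_rpow_of_exponent_le (by linarith [two_le_jml i])
      (mul_le_mul_of_nonneg_left (hnat i) hτ0)
  have hsubprod : ∀ V : Finset ℤ, ℓ.support ⊆ V →
      (∏ a ∈ T, jml a.1) ^ τ ≤ ∏ i ∈ V, jml i ^ (τ * ((α i : ℝ) + β i)) := by
    intro V hV
    rw [hPT]
    calc _ ≤ ∏ i ∈ ℓ.support, jml i ^ (τ * ((α i : ℝ) + β i)) :=
          Finset.prod_le_prod (fun i _ => Real.rpow_nonneg (hjpos i).le _) fun i _ => hmono i
      _ ≤ _ := by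
          rw [← Finset.prod_sdiff hV]
          exact le_mul_of_one_le_left
            (Finset.prod_nonneg fun i _ => zero_le_one.trans (hone i))
            (Finset.one_le_prod fun i _ => hone i)
  have hPT0 : 0 ≤ (∏ a ∈ T, jml a.1) ^ τ :=
    Real.rpow_nonneg (Finset.prod_nonneg fun a _ => (hjpos _).le) _
  have h6 : (1 : ℝ) ≤ 6 ^ τ := Real.one_le_rpow (by norm_num) hτ0
  by_cases hlj : ℓ j = 0
  · -- cancelled index
    have hjU : j ∈ U := by
      by_contra h
      have := hUα j h
      omega
    have hj2 : (2 : ℝ) ≤ (α j : ℝ) + β j := by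
      have : 2 ≤ α j + β j := by have := hℓ j; omega
      exact_mod_cast this
    rw [← Finset.mul_prod_erase U _ hjU]
    have hV : ℓ.support ⊆ U.erase j := by
      intro i hi
      refine Finset.mem_erase.2 ⟨?_, hsub hi⟩
      rintro rfl
      exact Finsupp.mem_support_iff.1 hi hlj
    have hA := hsubprod _ hV
    have hB : jml j ^ (2 * τ) ≤ jml j ^ (τ * ((α j : ℝ) + β j)) :=
      Real.rpow_le_rpow_of_exponent_le (by linarith [two_le_jml j]) (by nlinarith)
    have hE : ∏ a ∈ T, (4 * jml a.1 ^ W) ≤ (∏ a ∈ T, jml a.1) ^ τ := by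
      rw [← Real.finsetProd_rpow _ _ (fun a _ => (hjpos a.1).le)]
      apply Finset.prod_le_prod
      · intro a _
        have := Real.rpow_nonneg (hjpos a.1).le W
        positivity
      · intro a _
        have h2 := two_le_jml a.1
        calc 4 * jml a.1 ^ W ≤ jml a.1 ^ (2 : ℝ) * jml a.1 ^ W := by
              apply mul_le_mul_of_nonneg_right _ (Real.rpow_nonneg (hjpos a.1).le W)
              rw [Real.rpow_two]; nlinarith
          _ = jml a.1 ^ (2 + W) := (Real.rpow_add (hjpos a.1) _ _).symm
          _ ≤ _ := Real.rpow_le_rpow_of_exponent_le (by linarith) (by linarith)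
    have h16 : (1 : ℝ) ≤ ((4 : ℝ) ^ (6 : ℕ) * Real.exp 27) ^ W :=
      (Real.one_le_rpow (by norm_num) (by linarith)).trans hC
    have hj0 : 0 ≤ jml j ^ (2 * τ) := Real.rpow_nonneg (hjpos j).le _
    have hC1 := one_le_mul_of_one_le_of_one_le h6 h16
    generalize ((4 : ℝ) ^ (6 : ℕ) * Real.exp 27) ^ W = C at *
    calc γ * jml j ^ (2 * τ) ≤ (D * (∏ a ∈ T, jml a.1) ^ τ) * jml j ^ (2 * τ) := by
          apply mul_le_mul_of_nonneg_right _ hj0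
          exact hdio'.trans (mul_le_mul_of_nonneg_left hE hD0)
      _ = 1 * D * (jml j ^ (2 * τ) * (∏ a ∈ T, jml a.1) ^ τ) := by ring
      _ ≤ _ := by
          apply mul_le_mul (mul_le_mul_of_nonneg_right hC1 hD0)
            (mul_le_mul hB hA hPT0 (hj0.trans hB)) (mul_nonneg hj0 hPT0)
          exact mul_nonneg (by linarith) hD0
  · have hjT : (⟨j, 0⟩ : Σ _ : ℤ, ℕ) ∈ T := by
      rw [hT, Finset.mem_sigma]
      refine ⟨Finsupp.mem_support_iff.2 hlj, ?_⟩
      simp only [Finset.mem_range]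
      omega
    have hTs : ∀ a ∈ T, ℓ a.1 ≠ 0 := fun a ha =>
      Finsupp.mem_support_iff.1 (Finset.mem_sigma.1 ha).1
    have key := abstract_bound T (fun a => a.1) (fun a => (ℓ a.1).sign)
      (fun a => ω a.1 - (a.1 : ℝ) ^ 2) ?_ ?_ ?_ ?_ ?_ W τ γ hW hτ hγ0 hγ1 D ?_ hdio' ⟨j, 0⟩ hjT
    · refine key.trans ?_
      apply mul_le_mul _ (hsubprod U hsub) hPT0 (by positivity)
      gcongr
    · intro a ha
      rcases lt_or_gt_of_ne (hTs a ha) with h | h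
      · right; exact Int.sign_eq_neg_one_of_neg h
      · left; exact Int.sign_eq_one_of_pos h
    · intro a _ b _ h
      exact congrArg (fun z => (ℓ z).sign) h
    · have h := hTsum (fun _ => 1)
      simp only [mul_one, one_mul] at h
      rw [hmass0] at h
      exact_mod_cast h
    · rw [hTsum (fun i => (i : ℝ)), hmom]
    · intro a _
      have h1 : 1 ≤ jap a.1 ^ q := Real.one_le_rpow (one_le_jap _) hq
      have h2 := hω a.1
      nlinarith [abs_nonneg (ω a.1 - (a.1 : ℝ) ^ 2)]
    · rw [hD, ← hTsum ω]
      congr 1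
      apply Finset.sum_congr rfl
      intro a _
      ring
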